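/- Let (Ω, ℱ, (ℱ_t)_{t≥0}, ℙ) be a filtered probability space satisfying the usual conditions. Let X, Y be nonnegative càdlàg adapted processes such that the product XY is a supermartingale, and let c, f be nonnegative progressively measurable processes with E[∫₀^∞ f_t Y_t dt] < ∞. Suppose the process Λ_t := X_t Y_t + ∫₀^t (c_s − f_s) Y_s ds is a supermartingale with Λ₀ = 1, and that the budget constraint is saturated: E[∫₀^∞ (c_t − f_t) Y_t dt] = 1. Then: (i) Λ is a martingale on [0,∞), i.e. E[Λ_t | ℱ_s] = Λ_s a.s. for all s ≤ t; (ii) Λ converges a.s. to an integrable random variable Λ_∞ and, extended by Λ_∞, is a uniformly integrable martingale; (iii) XY is a potential: lim_{t→∞} E[X_t Y_t] = 0; (iv) X_t Y_t converges a.s. as t → ∞ and its limit is 0 a.s.; and consequently X_t Y_t = E[∫_t^∞ (c_s − f_s) Y_s ds | ℱ_t] for every t ≥ 0. -/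

import Mathlib

open MeasureTheory Filter Topology

/-!
Write `g = (c - f) Y`, `Z = X Y`, `A t = ∫₀ᵗ g` and `R t = ∫ₜ^∞ |g|`, so that `E[R t] → 0`. Since
`Z ≥ 0`, for `t ≤ r` the supermartingale property gives `Λ t ≥ E[Λ r | ℱ t] ≥ E[A r | ℱ t]`, and
`A r → A ∞` in `L¹` gives `Λ t ≥ E[A ∞ | ℱ t]`. Saturation says `E[Λ t] ≤ E[Λ 0] = E[A ∞]`, which
forces `Λ t = E[A ∞ | ℱ t]`. Hence `Λ` is a uniformly integrable martingale and
`Z t = E[∫ₜ^∞ g | ℱ t]`, so `E[Z t] ≤ E[R t] → 0`. For `t ≥ T` moreover `Z t ≤ E[R T | ℱ t]`;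
Doob's maximal inequality along a countable dense set of times, together with right-continuity,
yields `ε P(sup_{t ≥ T} Z t > ε) ≤ E[R T] → 0`, which is the almost sure convergence of `Z` to `0`.
-/

section JointMeasurability

variable {Ω β : Type*} {m0 : MeasurableSpace Ω} [TopologicalSpace β]
  [TopologicalSpace.PseudoMetrizableSpace β]

lemma tendsto_floor_mul_add_one_div_nhdsGE (t : ℝ) :
    Tendsto (fun n : ℕ => ((⌊t * ((n : ℝ) + 1)⌋ : ℝ) + 1) / ((n : ℝ) + 1)) atTop (𝓝[≥] t) := by
  have lower (n : ℕ) : t ≤ ((⌊t * ((n : ℝ) + 1)⌋ : ℝ) + 1) / ((n : ℝ) + 1) := by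
    rw [le_div_iff₀ (by positivity)]
    exact (Int.lt_floor_add_one _).le
  have upper (n : ℕ) :
      ((⌊t * ((n : ℝ) + 1)⌋ : ℝ) + 1) / ((n : ℝ) + 1) ≤ t + 1 / ((n : ℝ) + 1) := by
    rw [div_le_iff₀ (by positivity), add_mul, one_div_mul_cancel (by positivity)]
    gcongr
    exact Int.floor_le _
  have mesh : Tendsto (fun n : ℕ => t + 1 / ((n : ℝ) + 1)) atTop (𝓝 t) := by
    simpa using tendsto_one_div_add_atTop_nhds_zero_nat.const_add t
  exact tendsto_nhdsWithin_iff.2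
    ⟨tendsto_of_tendsto_of_tendsto_of_le_of_le tendsto_const_nhds mesh lower upper,
      Eventually.of_forall lower⟩

lemma measurable_uncurry_of_continuousWithinAt_Ici [MeasurableSpace β] [BorelSpace β]
    {Y : ℝ → Ω → β} (hm : ∀ t, Measurable (Y t))
    (hrc : ∀ ω t, ContinuousWithinAt (fun s => Y s ω) (Set.Ici t) t) :
    Measurable (Function.uncurry Y) := by
  refine measurable_of_tendsto_metrizable (f := fun (n : ℕ) (p : ℝ × Ω) =>
    Y (((⌊p.1 * ((n : ℝ) + 1)⌋ : ℝ) + 1) / ((n : ℝ) + 1)) p.2) (fun n => ?_)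
    (tendsto_pi_nhds.2 fun p => (hrc p.2 p.1).tendsto.comp
      (tendsto_floor_mul_add_one_div_nhdsGE p.1))
  have on_grid : Measurable fun q : ℤ × Ω => Y (((q.1 : ℝ) + 1) / ((n : ℝ) + 1)) q.2 :=
    measurable_from_prod_countable_right fun k => hm (((k : ℝ) + 1) / ((n : ℝ) + 1))
  have to_grid : Measurable fun p : ℝ × Ω => (⌊p.1 * ((n : ℝ) + 1)⌋, p.2) := by fun_prop
  exact on_grid.comp to_grid

lemma stronglyMeasurable_uncurry_of_isStronglyProgressive {ι : Type*} [LinearOrder ι] [Nonempty ι]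
    [(atTop : Filter ι).IsCountablyGenerated] [TopologicalSpace ι] [OrderClosedTopology ι]
    [SecondCountableTopology ι] [MeasurableSpace ι] [OpensMeasurableSpace ι]
    {ℱ : Filtration ι m0} {c : ι → Ω → β} (hc : IsStronglyProgressive ℱ c) :
    StronglyMeasurable (Function.uncurry c) := by
  obtain ⟨u, hu⟩ := exists_seq_tendsto (atTop : Filter ι)
  refine stronglyMeasurable_of_tendsto (f := fun n (p : ι × Ω) => c (min p.1 (u n)) p.2) atTop
    (fun n => ?_) (tendsto_pi_nhds.2 fun p => tendsto_const_nhds.congr' ?_)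
  · have restricted : StronglyMeasurable fun p : Set.Iic (u n) × Ω => c p.1 p.2 :=
      (hc (u n)).mono (sup_le_sup le_rfl (MeasurableSpace.comap_mono (ℱ.le _)))
    have clamp : Measurable fun p : ι × Ω =>
        ((⟨min p.1 (u n), min_le_right _ _⟩ : Set.Iic (u n)), p.2) :=
      (measurable_fst.min measurable_const).subtype_mk.prodMk measurable_snd
    exact restricted.comp_measurable clamp
  · filter_upwards [hu.eventually_ge_atTop p.1] with n hn
    rw [min_eq_left hn, Function.uncurry]

end JointMeasurability

section MaximalInequality

variable {Ω ι : Type*} {m0 : MeasurableSpace Ω} {μ : Measure Ω} [IsFiniteMeasure μ]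
  [LinearOrder ι] {ℱ : Filtration ι m0} {N : ι → Ω → ℝ}

/-- Localizing to events of `ℱ T` makes the induction work: at the earliest time `a` of the
finset, split along `{ε ≤ N a}` and apply the induction hypothesis on the complement. -/
lemma mul_measureReal_inter_exists_mem_finset_le_setIntegral (hN : Supermartingale N ℱ μ)
    (hnonneg : ∀ t, 0 ≤ᵐ[μ] N t) (ε : ℝ) (s : Finset ι) {T : ι} (hT : ∀ t ∈ s, T ≤ t) {A : Set Ω}
    (hA : MeasurableSet[ℱ T] A) :
    ε * μ.real (A ∩ {ω | ∃ t ∈ s, ε ≤ N t ω}) ≤ ∫ ω in A, N T ω ∂μ := by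
  induction s using Finset.induction_on_min generalizing T A with
  | empty => simpa using setIntegral_nonneg_of_ae (hnonneg T)
  | insert a s ha ih =>
    have hTa : T ≤ a := hT a (Finset.mem_insert_self a s)
    set H : Set Ω := {ω | ε ≤ N a ω}
    have hAa : MeasurableSet[ℱ a] A := ℱ.mono hTa _ hA
    have hHa : MeasurableSet[ℱ a] H :=
      (hN.stronglyMeasurable a).measurable measurableSet_Ici
    have hA0 : MeasurableSet A := ℱ.le a _ hAa
    have hH0 : MeasurableSet H := ℱ.le a _ hHa
    have hit : ε * μ.real (A ∩ H) ≤ ∫ ω in A ∩ H, N a ω ∂μ := by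
      simpa [mul_comm] using setIntegral_mono_on (integrable_const ε).integrableOn
        (hN.integrable a).integrableOn (hA0.inter hH0) fun ω hω => hω.2
    have miss : ε * μ.real ((A \ H) ∩ {ω | ∃ t ∈ s, ε ≤ N t ω}) ≤ ∫ ω in A \ H, N a ω ∂μ :=
      ih (fun t ht => (ha t ht).le) (hAa.diff hHa)
    have split : A ∩ {ω | ∃ t ∈ insert a s, ε ≤ N t ω}
        = (A ∩ H) ∪ ((A \ H) ∩ {ω | ∃ t ∈ s, ε ≤ N t ω}) := by
      ext ω
      simp only [H, Finset.exists_mem_insert, Set.mem_inter_iff, Set.mem_union, Set.mem_sdiff,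
        Set.mem_ofPred_eq]
      tauto
    have disjoint : Disjoint (A ∩ H) ((A \ H) ∩ {ω | ∃ t ∈ s, ε ≤ N t ω}) :=
      Set.disjoint_sdiff_inter.symm.mono_right Set.inter_subset_left
    calc ε * μ.real (A ∩ {ω | ∃ t ∈ insert a s, ε ≤ N t ω})
        = ε * μ.real (A ∩ H) + ε * μ.real ((A \ H) ∩ {ω | ∃ t ∈ s, ε ≤ N t ω}) := by
          rw [split, measureReal_union' disjoint (hA0.inter hH0), mul_add]
      _ ≤ (∫ ω in A ∩ H, N a ω ∂μ) + ∫ ω in A \ H, N a ω ∂μ := add_le_add hit miss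
      _ = ∫ ω in A, N a ω ∂μ := integral_inter_add_sdiff hH0 (hN.integrable a).integrableOn
      _ ≤ ∫ ω in A, N T ω ∂μ := hN.setIntegral_le hTa hA

lemma mul_measureReal_exists_mem_countable_le_integral (hN : Supermartingale N ℱ μ)
    (hnonneg : ∀ t, 0 ≤ᵐ[μ] N t) (ε : ℝ) {C : Set ι} (hC : C.Countable) {T : ι}
    (hT : ∀ t ∈ C, T ≤ t) :
    ε * μ.real {ω | ∃ t ∈ C, ε ≤ N t ω} ≤ ∫ ω, N T ω ∂μ := by
  have := hC.to_subtype
  let E (s : Finset C) : Set Ω := {ω | ∃ t ∈ s, ε ≤ N t ω}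
  have E_mono : Monotone E := fun s s' hss' ω ⟨t, ht, h⟩ => ⟨t, hss' ht, h⟩
  have iUnion_E : ⋃ s, E s = {ω | ∃ t ∈ C, ε ≤ N t ω} := by
    ext ω
    simp only [E, Set.mem_iUnion, Set.mem_ofPred_eq]
    exact ⟨fun ⟨_, t, _, h⟩ => ⟨t, t.2, h⟩, fun ⟨t, ht, h⟩ => ⟨{⟨t, ht⟩}, ⟨t, ht⟩,
      Finset.mem_singleton_self _, h⟩⟩
  have lim : Tendsto (fun s => ε * μ.real (E s)) atTop
      (𝓝 (ε * μ.real {ω | ∃ t ∈ C, ε ≤ N t ω})) := by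
    rw [← iUnion_E]
    exact ((ENNReal.tendsto_toReal (measure_ne_top μ _)).comp
      (tendsto_measure_iUnion_atTop E_mono)).const_mul ε
  refine le_of_tendsto' lim fun s => ?_
  simpa [E] using mul_measureReal_inter_exists_mem_finset_le_setIntegral hN hnonneg ε
    (s.map (Function.Embedding.subtype _)) (by simpa using fun t ht _ => hT t ht)
    MeasurableSet.univ

variable [TopologicalSpace ι] [OrderTopology ι] [DenselyOrdered ι] [NoMaxOrder ι]

lemma exists_mem_ge_lt_of_dense_of_continuousWithinAt_Ici {D : Set ι} (hD : Dense D)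
    {z : ι → ℝ} {t : ι} (hz : ContinuousWithinAt z (Set.Ici t) t) {ε : ℝ} (hε : ε < z t) :
    ∃ q ∈ D, t ≤ q ∧ ε < z q := by
  obtain ⟨u, htu, hu⟩ := mem_nhdsGE_iff_exists_Ico_subset.1 (hz.eventually (lt_mem_nhds hε))
  obtain ⟨q, hqD, htq, hqu⟩ := hD.exists_between htu
  exact ⟨q, hqD, htq.le, hu ⟨htq.le, hqu⟩⟩

variable [TopologicalSpace.SeparableSpace ι] {Z : ι → Ω → ℝ}

lemma mul_measureReal_exists_ge_lt_le_integral_of_le_condExp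
    (hrc : ∀ ω t, ContinuousWithinAt (fun s => Z s ω) (Set.Ici t) t) {ξ : Ω → ℝ}
    (hξ_nonneg : 0 ≤ᵐ[μ] ξ) {T : ι} (hZ : ∀ t ≥ T, Z t ≤ᵐ[μ] μ[ξ | ℱ t]) {ε : ℝ} (hε : 0 ≤ ε) :
    ε * μ.real {ω | ∃ t ≥ T, ε < Z t ω} ≤ ∫ ω, ξ ω ∂μ := by
  obtain ⟨D, hD_countable, hD⟩ := TopologicalSpace.exists_countable_dense ι
  have hC : (D ∩ Set.Ici T).Countable := hD_countable.mono Set.inter_subset_left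
  have hZC : ∀ᵐ ω ∂μ, ∀ q ∈ D ∩ Set.Ici T, Z q ω ≤ (μ[ξ | ℱ q]) ω :=
    (ae_ball_iff hC).2 fun q hq => hZ q hq.2
  have reduction : {ω | ∃ t ≥ T, ε < Z t ω} ≤ᵐ[μ]
      {ω | ∃ q ∈ D ∩ Set.Ici T, ε ≤ (μ[ξ | ℱ q]) ω} := by
    filter_upwards [hZC] with ω hω ⟨t, hTt, hεt⟩
    obtain ⟨q, hqD, htq, hεq⟩ := 
      exists_mem_ge_lt_of_dense_of_continuousWithinAt_Ici hD (hrc ω t) hεt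
    have hq : q ∈ D ∩ Set.Ici T := ⟨hqD, le_trans hTt htq⟩
    exact ⟨q, hq, hεq.le.trans (hω q hq)⟩
  calc ε * μ.real {ω | ∃ t ≥ T, ε < Z t ω}
      ≤ ε * μ.real {ω | ∃ q ∈ D ∩ Set.Ici T, ε ≤ (μ[ξ | ℱ q]) ω} :=
        mul_le_mul_of_nonneg_left
          (ENNReal.toReal_mono (measure_ne_top μ _) (measure_mono_ae reduction)) hε
    _ ≤ ∫ ω, (μ[ξ | ℱ T]) ω ∂μ :=
        mul_measureReal_exists_mem_countable_le_integral
          (martingale_condExp ξ ℱ μ).supermartingale (fun _ => condExp_nonneg hξ_nonneg) ε hC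
          fun q hq => hq.2
    _ = ∫ ω, ξ ω ∂μ := integral_condExp (ℱ.le T)

lemma ae_tendsto_zero_of_le_condExp [Nonempty ι]
    (hrc : ∀ ω t, ContinuousWithinAt (fun s => Z s ω) (Set.Ici t) t)
    (hnonneg : ∀ t ω, 0 ≤ Z t ω) {ξ : ι → Ω → ℝ} (hξ_nonneg : ∀ T, 0 ≤ᵐ[μ] ξ T)
    (hZ : ∀ᶠ T in atTop, ∀ t ≥ T, Z t ≤ᵐ[μ] μ[ξ T | ℱ t])
    (hξ : Tendsto (fun T => ∫ ω, ξ T ω ∂μ) atTop (𝓝 0)) :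
    ∀ᵐ ω ∂μ, Tendsto (fun t => Z t ω) atTop (𝓝 0) := by
  have eventually_le (n : ℕ) : ∀ᵐ ω ∂μ, ∀ᶠ t in atTop, Z t ω ≤ 1 / ((n : ℝ) + 1) := by
    set ε : ℝ := 1 / ((n : ℝ) + 1)
    have hε : 0 < ε := Nat.one_div_pos_of_nat
    have bound : ε * μ.real {ω | ∃ᶠ t in atTop, ε < Z t ω} ≤ 0 := by
      refine ge_of_tendsto hξ ?_
      filter_upwards [hZ] with T hT
      refine le_trans ?_
        (mul_measureReal_exists_ge_lt_le_integral_of_le_condExp hrc (hξ_nonneg T) hT hε.le)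
      gcongr with ω
      · exact measure_ne_top μ _
      exact fun h => frequently_atTop.1 h T
    have null : μ.real {ω | ∃ᶠ t in atTop, ε < Z t ω} = 0 :=
      le_antisymm (nonpos_of_mul_nonpos_right bound hε) measureReal_nonneg
    filter_upwards [measure_eq_zero_iff_ae_notMem.1 ((measureReal_eq_zero_iff).1 null)] with ω hω
    simpa using hω
  filter_upwards [ae_all_iff.2 eventually_le] with ω hω
  refine tendsto_order.2 ⟨fun b hb => Eventually.of_forall fun t => hb.trans_le (hnonneg t ω),
    fun b hb => ?_⟩
  obtain ⟨n, hn⟩ := exists_nat_one_div_lt hb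
  exact (hω n).mono fun t ht => ht.trans_lt hn

end MaximalInequality

section Closure

variable {Ω : Type*} {m0 : MeasurableSpace Ω} {μ : Measure Ω}

lemma condExp_ae_le_of_tendsto_integral_abs_sub {ι : Type*} {l : Filter ι} [l.NeBot]
    {m : MeasurableSpace Ω} {A : ι → Ω → ℝ} {Ainf ℓ : Ω → ℝ} (hA : ∀ᶠ r in l, Integrable (A r) μ)
    (hAinf : Integrable Ainf μ) (hℓ : Integrable ℓ μ)
    (hlim : Tendsto (fun r => ∫ ω, |Ainf ω - A r ω| ∂μ) l (𝓝 0))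
    (hle : ∀ᶠ r in l, μ[A r | m] ≤ᵐ[μ] ℓ) : μ[Ainf | m] ≤ᵐ[μ] ℓ := by
  have excess_integrable : Integrable (fun ω => max ((μ[Ainf | m]) ω - ℓ ω) 0) μ :=
    (integrable_condExp.sub hℓ).pos_part
  have excess_le : ∫ ω, max ((μ[Ainf | m]) ω - ℓ ω) 0 ∂μ ≤ 0 := by
    refine ge_of_tendsto hlim ?_
    filter_upwards [hA, hle] with r hAr hler
    calc ∫ ω, max ((μ[Ainf | m]) ω - ℓ ω) 0 ∂μ
        ≤ ∫ ω, |(μ[Ainf - A r | m]) ω| ∂μ := by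
          refine integral_mono_ae excess_integrable integrable_condExp.abs ?_
          filter_upwards [hler, condExp_sub hAinf hAr m] with ω hω hsub
          rw [hsub, Pi.sub_apply]
          exact max_le ((sub_le_sub_left hω _).trans (le_abs_self _)) (abs_nonneg _)
      _ ≤ ∫ ω, |Ainf ω - A r ω| ∂μ := integral_abs_condExp_le _
  have excess_eq_zero := (integral_eq_zero_iff_of_nonneg (fun _ => le_max_right _ _)
    excess_integrable).1 (excess_le.antisymm (integral_nonneg fun _ => le_max_right _ _))
  filter_upwards [excess_eq_zero] with ω hω
  exact sub_nonpos.1 (max_eq_right_iff.1 hω)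

lemma exists_forall_setLIntegral_ofReal_abs_le_of_uniformIntegrable {ι : Type*} {M : ι → Ω → ℝ}
    (hM : UniformIntegrable M 1 μ) {ε : ℝ} (hε : 0 < ε) :
    ∃ K : ℝ, ∀ i, ∫⁻ ω in {ω | K ≤ |M i ω|}, ENNReal.ofReal |M i ω| ∂μ ≤ ENNReal.ofReal ε := by
  obtain ⟨K, hK⟩ := hM.spec one_ne_zero ENNReal.one_ne_top hε
  refine ⟨K, fun i => le_trans ?_ (hK i)⟩
  have level : NullMeasurableSet {ω | K ≤ ‖M i ω‖₊} μ :=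
    nullMeasurableSet_le aemeasurable_const (hM.1 i).aemeasurable.nnnorm
  rw [eLpNorm_one_eq_lintegral_enorm]
  simp only [enorm_indicator_eq_indicator_enorm]
  rw [lintegral_indicator₀ level]
  simp [← NNReal.coe_le_coe, ← ofReal_norm]

end Closure

section TailIntegrals

variable {Ω E : Type*} {m0 : MeasurableSpace Ω} {μ : Measure Ω}
  [NormedAddCommGroup E] {g : ℝ → Ω → E} {a : ℝ}

lemma integrable_setIntegral_of_subset [NormedSpace ℝ E] {ι : Type*} [MeasurableSpace ι]
    {ν : Measure ι} [SFinite ν] {S S' : Set ι} {h : ι → Ω → E}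
    (hh : Integrable (fun p : Ω × ι => h p.2 p.1) (μ.prod (ν.restrict S))) (hS : S' ⊆ S) :
    Integrable (fun ω => ∫ s in S', h s ω ∂ν) μ :=
  (hh.mono_measure (Measure.prod_mono le_rfl (Measure.restrict_mono_set ν hS))).integral_prod_left

lemma integrable_prod_of_lintegral_ofReal_lt_top {ι : Type*} [MeasurableSpace ι] {ν : Measure ι}
    [SFinite ν] {h : ι → Ω → ℝ} (hm : Measurable (Function.uncurry h))
    (hnonneg : ∀ t ω, 0 ≤ h t ω) (hfin : ∫⁻ ω, ∫⁻ t, ENNReal.ofReal (h t ω) ∂ν ∂μ < ⊤) :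
    Integrable (fun p : Ω × ι => h p.2 p.1) (μ.prod ν) := by
  have hm' : Measurable fun p : Ω × ι => h p.2 p.1 := hm.comp measurable_swap
  refine ⟨hm'.aestronglyMeasurable, ?_⟩
  rwa [hasFiniteIntegral_iff_ofReal (f := fun p : Ω × ι => h p.2 p.1)
      (Eventually.of_forall fun p => hnonneg p.2 p.1),
    lintegral_prod _ hm'.ennreal_ofReal.aemeasurable]

lemma integrable_prod_sub_mul_of_isStronglyProgressive {ℱ : Filtration ℝ m0}
    {Y c f : ℝ → Ω → ℝ} (hY : ∀ t, Measurable (Y t))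
    (hY_rc : ∀ ω t, ContinuousWithinAt (fun s => Y s ω) (Set.Ici t) t)
    (hY_nonneg : ∀ t ω, 0 ≤ Y t ω) (hc : IsStronglyProgressive ℱ c)
    (hf : IsStronglyProgressive ℱ f) (hc_nonneg : ∀ t ω, 0 ≤ c t ω) (hf_nonneg : ∀ t ω, 0 ≤ f t ω)
    {ν : Measure ℝ} [SFinite ν] (hcY : ∫⁻ ω, ∫⁻ t, ENNReal.ofReal (c t ω * Y t ω) ∂ν ∂μ < ⊤)
    (hfY : ∫⁻ ω, ∫⁻ t, ENNReal.ofReal (f t ω * Y t ω) ∂ν ∂μ < ⊤) :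
    Integrable (fun p : Ω × ℝ => (c p.2 p.1 - f p.2 p.1) * Y p.2 p.1) (μ.prod ν) := by
  have integrable_mul {h : ℝ → Ω → ℝ} (hh : IsStronglyProgressive ℱ h)
      (hh_nonneg : ∀ t ω, 0 ≤ h t ω)
      (hfin : ∫⁻ ω, ∫⁻ t, ENNReal.ofReal (h t ω * Y t ω) ∂ν ∂μ < ⊤) :
      Integrable (fun p : Ω × ℝ => h p.2 p.1 * Y p.2 p.1) (μ.prod ν) :=
    integrable_prod_of_lintegral_ofReal_lt_top (h := fun t ω => h t ω * Y t ω)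
      ((stronglyMeasurable_uncurry_of_isStronglyProgressive hh).measurable.mul
        (measurable_uncurry_of_continuousWithinAt_Ici hY hY_rc))
      (fun t ω => mul_nonneg (hh_nonneg t ω) (hY_nonneg t ω)) hfin
  simp only [sub_mul]
  exact (integrable_mul hc hc_nonneg hcY).sub (integrable_mul hf hf_nonneg hfY)

variable [SFinite μ]

lemma tendsto_integral_integral_norm_Ioi_zero
    (hg : Integrable (fun p : Ω × ℝ => g p.2 p.1) (μ.prod (volume.restrict (Set.Ioi a)))) :
    Tendsto (fun t => ∫ ω, (∫ s in Set.Ioi t, ‖g s ω‖) ∂μ) atTop (𝓝 0) := by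
  rw [← integral_zero Ω ℝ (μ := μ)]
  refine tendsto_integral_filter_of_dominated_convergence
    (fun ω => ∫ s in Set.Ioi a, ‖g s ω‖) ?_ ?_ (integrable_setIntegral_of_subset hg.norm subset_rfl)
    (Eventually.of_forall fun ω => tendsto_integral_Ioi_zero tendsto_id)
  · filter_upwards [eventually_ge_atTop a] with t ht
    exact (integrable_setIntegral_of_subset hg.norm
      (Set.Ioi_subset_Ioi ht)).aestronglyMeasurable
  · filter_upwards [eventually_ge_atTop a] with t ht
    filter_upwards [hg.norm.prod_right_ae] with ω hω
    rw [Real.norm_of_nonneg (integral_nonneg fun _ => norm_nonneg _)]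
    exact setIntegral_mono_set hω (Eventually.of_forall fun _ => norm_nonneg _)
      (Set.Ioi_subset_Ioi ht).eventuallyLE

variable [NormedSpace ℝ E]

lemma ae_integral_Ioi_sub_integral_Ioc
    (hg : Integrable (fun p : Ω × ℝ => g p.2 p.1) (μ.prod (volume.restrict (Set.Ioi a)))) {t : ℝ}
    (ht : a ≤ t) :
    ∀ᵐ ω ∂μ, (∫ s in Set.Ioi a, g s ω) - ∫ s in Set.Ioc a t, g s ω = ∫ s in Set.Ioi t, g s ω := by
  filter_upwards [hg.prod_right_ae] with ω hω
  have hω : IntegrableOn (fun s => g s ω) (Set.Ioi a) := hω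
  rw [← intervalIntegral.integral_of_le ht, sub_eq_iff_eq_add',
    intervalIntegral.integral_interval_add_Ioi hω (hω.mono_set (Set.Ioi_subset_Ioi ht))]

lemma ae_tendsto_integral_Ioc_atTop
    (hg : Integrable (fun p : Ω × ℝ => g p.2 p.1) (μ.prod (volume.restrict (Set.Ioi a)))) :
    ∀ᵐ ω ∂μ, Tendsto (fun t => ∫ s in Set.Ioc a t, g s ω) atTop
      (𝓝 (∫ s in Set.Ioi a, g s ω)) := by
  filter_upwards [hg.prod_right_ae] with ω hω
  refine (intervalIntegral_tendsto_integral_Ioi a hω tendsto_id).congr' ?_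
  filter_upwards [eventually_ge_atTop a] with t ht
  exact intervalIntegral.integral_of_le ht

lemma tendsto_integral_norm_integral_Ioi_zero
    (hg : Integrable (fun p : Ω × ℝ => g p.2 p.1) (μ.prod (volume.restrict (Set.Ioi a)))) :
    Tendsto (fun t => ∫ ω, ‖∫ s in Set.Ioi t, g s ω‖ ∂μ) atTop (𝓝 0) := by
  refine squeeze_zero' (Eventually.of_forall fun t => integral_nonneg fun ω => norm_nonneg _) ?_
    (tendsto_integral_integral_norm_Ioi_zero hg)
  filter_upwards [eventually_ge_atTop a] with t ht
  have hat : Set.Ioi t ⊆ Set.Ioi a := Set.Ioi_subset_Ioi ht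
  exact integral_mono (integrable_setIntegral_of_subset hg hat).norm
    (integrable_setIntegral_of_subset hg.norm hat) fun ω => norm_integral_le_integral_norm _

lemma tendsto_integral_norm_integral_Ioi_sub_integral_Ioc_zero
    (hg : Integrable (fun p : Ω × ℝ => g p.2 p.1) (μ.prod (volume.restrict (Set.Ioi a)))) :
    Tendsto (fun t => ∫ ω, ‖(∫ s in Set.Ioi a, g s ω) - ∫ s in Set.Ioc a t, g s ω‖ ∂μ) atTop
      (𝓝 0) := by
  refine (tendsto_integral_norm_integral_Ioi_zero hg).congr' ?_
  filter_upwards [eventually_ge_atTop a] with t ht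
  refine integral_congr_ae ?_
  filter_upwards [ae_integral_Ioi_sub_integral_Ioc hg ht] with ω hω
  rw [hω]

end TailIntegrals

section Potential

variable {Ω : Type*} {m m0 : MeasurableSpace Ω} {μ : Measure Ω} [IsFiniteMeasure μ]
  {ℱ : Filtration ℝ m0} {Z Λ g : ℝ → Ω → ℝ} {a : ℝ}

lemma condExp_integral_Ioi_ae_eq_sub_integral_Ioc {E : Type*} [NormedAddCommGroup E]
    [NormedSpace ℝ E] [CompleteSpace E] {h : ℝ → Ω → E} (hm : m ≤ m0)
    (hh : Integrable (fun p : Ω × ℝ => h p.2 p.1) (μ.prod (volume.restrict (Set.Ioi a)))) {t : ℝ}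
    (ht : a ≤ t) (hhm : StronglyMeasurable[m] fun ω => ∫ s in Set.Ioc a t, h s ω) :
    μ[fun ω => ∫ s in Set.Ioi t, h s ω | m] =ᵐ[μ]
      fun ω => (μ[fun ω => ∫ s in Set.Ioi a, h s ω | m]) ω - ∫ s in Set.Ioc a t, h s ω := by
  have past_integrable : Integrable (fun ω => ∫ s in Set.Ioc a t, h s ω) μ :=
    integrable_setIntegral_of_subset hh Set.Ioc_subset_Ioi_self
  have total_integrable := integrable_setIntegral_of_subset hh subset_rfl
  have tail := condExp_congr_ae (m := m) (ae_integral_Ioi_sub_integral_Ioc hh ht)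
  have split := condExp_sub total_integrable past_integrable m
  rw [condExp_of_stronglyMeasurable hm hhm past_integrable] at split
  exact tail.symm.trans split

lemma tendsto_integral_zero_of_condExp_integral_Ioi_ae_eq
    (hg : Integrable (fun p : Ω × ℝ => g p.2 p.1) (μ.prod (volume.restrict (Set.Ioi a))))
    (hZ : ∀ t ≥ a, μ[fun ω => ∫ s in Set.Ioi t, g s ω | ℱ t] =ᵐ[μ] Z t) :
    Tendsto (fun t => ∫ ω, Z t ω ∂μ) atTop (𝓝 0) := by
  have tail : Tendsto (fun t => ∫ ω, (∫ s in Set.Ioi t, g s ω) ∂μ) atTop (𝓝 0) :=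
    squeeze_zero_norm (fun _ => norm_integral_le_integral_norm _)
      (tendsto_integral_norm_integral_Ioi_zero hg)
  refine tail.congr' ?_
  filter_upwards [eventually_ge_atTop a] with t ht
  rw [← integral_congr_ae (hZ t ht), integral_condExp (ℱ.le t)]

lemma ae_tendsto_zero_of_condExp_integral_Ioi_ae_eq
    (hrc : ∀ ω t, ContinuousWithinAt (fun s => Z s ω) (Set.Ici t) t)
    (hnonneg : ∀ t ω, 0 ≤ Z t ω)
    (hg : Integrable (fun p : Ω × ℝ => g p.2 p.1) (μ.prod (volume.restrict (Set.Ioi a))))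
    (hZ : ∀ t ≥ a, μ[fun ω => ∫ s in Set.Ioi t, g s ω | ℱ t] =ᵐ[μ] Z t) :
    ∀ᵐ ω ∂μ, Tendsto (fun t => Z t ω) atTop (𝓝 0) := by
  refine ae_tendsto_zero_of_le_condExp (ℱ := ℱ) hrc hnonneg
    (ξ := fun T ω => ∫ s in Set.Ioi T, ‖g s ω‖)
    (fun T => Eventually.of_forall fun ω => integral_nonneg fun _ => norm_nonneg _) ?_
    (tendsto_integral_integral_norm_Ioi_zero hg)
  filter_upwards [eventually_ge_atTop a] with T hT t hTt
  have ht : a ≤ t := le_trans hT hTt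
  refine (hZ t ht).symm.le.trans (condExp_mono
    (integrable_setIntegral_of_subset hg (Set.Ioi_subset_Ioi ht))
    (integrable_setIntegral_of_subset hg.norm (Set.Ioi_subset_Ioi hT)) ?_)
  filter_upwards [hg.norm.prod_right_ae] with ω hω
  have hω : IntegrableOn (fun s => ‖g s ω‖) (Set.Ioi a) := hω
  calc ∫ s in Set.Ioi t, g s ω
      ≤ ∫ s in Set.Ioi t, ‖g s ω‖ :=
        (Real.le_norm_self _).trans (norm_integral_le_integral_norm _)
    _ ≤ ∫ s in Set.Ioi T, ‖g s ω‖ :=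
        setIntegral_mono_set (hω.mono_set (Set.Ioi_subset_Ioi hT))
          (Eventually.of_forall fun _ => norm_nonneg _) (Set.Ioi_subset_Ioi hTt).eventuallyLE

lemma condExp_integral_Ioi_ae_le
    (hg : Integrable (fun p : Ω × ℝ => g p.2 p.1) (μ.prod (volume.restrict (Set.Ioi a))))
    (hΛ_int : ∀ t ≥ a, Integrable (Λ t) μ) (hΛ_ge : ∀ t ≥ a, ∀ ω, ∫ s in Set.Ioc a t, g s ω ≤ Λ t ω)
    (hΛ_super : ∀ s t, a ≤ s → s ≤ t → μ[Λ t | ℱ s] ≤ᵐ[μ] Λ s) {t : ℝ} (ht : a ≤ t) :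
    μ[fun ω => ∫ s in Set.Ioi a, g s ω | ℱ t] ≤ᵐ[μ] Λ t := by
  have past_integrable (r : ℝ) : Integrable (fun ω => ∫ s in Set.Ioc a r, g s ω) μ :=
    integrable_setIntegral_of_subset hg Set.Ioc_subset_Ioi_self
  refine condExp_ae_le_of_tendsto_integral_abs_sub (Eventually.of_forall past_integrable)
    (integrable_setIntegral_of_subset hg subset_rfl) (hΛ_int t ht)
    (tendsto_integral_norm_integral_Ioi_sub_integral_Ioc_zero hg) ?_
  filter_upwards [eventually_ge_atTop t] with r htr
  have har : a ≤ r := ht.trans htr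
  exact (condExp_mono (past_integrable r) (hΛ_int r har)
    (Eventually.of_forall (hΛ_ge r har))).trans (hΛ_super t r ht htr)

lemma condExp_integral_Ioi_ae_eq_of_integral_eq
    (hg : Integrable (fun p : Ω × ℝ => g p.2 p.1) (μ.prod (volume.restrict (Set.Ioi a))))
    (hΛ_int : ∀ t ≥ a, Integrable (Λ t) μ) (hΛ_ge : ∀ t ≥ a, ∀ ω, ∫ s in Set.Ioc a t, g s ω ≤ Λ t ω)
    (hΛ_super : ∀ s t, a ≤ s → s ≤ t → μ[Λ t | ℱ s] ≤ᵐ[μ] Λ s)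
    (hsaturated : ∫ ω, (∫ s in Set.Ioi a, g s ω) ∂μ = ∫ ω, Λ a ω ∂μ) {t : ℝ} (ht : a ≤ t) :
    μ[fun ω => ∫ s in Set.Ioi a, g s ω | ℱ t] =ᵐ[μ] Λ t := by
  have closure_le := condExp_integral_Ioi_ae_le hg hΛ_int hΛ_ge hΛ_super ht
  refine (integral_eq_iff_of_ae_le integrable_condExp (hΛ_int t ht) closure_le).1
    (le_antisymm (integral_mono_ae integrable_condExp (hΛ_int t ht) closure_le) ?_)
  calc ∫ ω, Λ t ω ∂μ
      = ∫ ω, (μ[Λ t | ℱ a]) ω ∂μ := (integral_condExp (ℱ.le a)).symm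
    _ ≤ ∫ ω, Λ a ω ∂μ :=
        integral_mono_ae integrable_condExp (hΛ_int a le_rfl) (hΛ_super a t le_rfl ht)
    _ = ∫ ω, (μ[fun ω => ∫ s in Set.Ioi a, g s ω | ℱ t]) ω ∂μ := by
        rw [integral_condExp (ℱ.le t), hsaturated]

end Potential

theorem optimal_wealth_process_general {Ω : Type*} {m0 : MeasurableSpace Ω} {μ : Measure Ω}
    [IsFiniteMeasure μ] (ℱ : Filtration ℝ m0) {Z Λ g : ℝ → Ω → ℝ}
    (hZ : ∀ t, 0 ≤ t → StronglyMeasurable[ℱ t] (Z t))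
    (hZ_rc : ∀ ω t, ContinuousWithinAt (fun s => Z s ω) (Set.Ici t) t)
    (hZ_nonneg : ∀ t ω, 0 ≤ Z t ω)
    (hg : Integrable (fun p : Ω × ℝ => g p.2 p.1) (μ.prod (volume.restrict (Set.Ioi 0))))
    (hΛ : ∀ t, 0 ≤ t → ∀ ω, Λ t ω = Z t ω + ∫ s in Set.Ioc 0 t, g s ω)
    (hΛ_adapted : ∀ t, 0 ≤ t → StronglyMeasurable[ℱ t] (Λ t))
    (hΛ_int : ∀ t, 0 ≤ t → Integrable (Λ t) μ)
    (hΛ_super : ∀ s t, 0 ≤ s → s ≤ t → μ[Λ t | ℱ s] ≤ᵐ[μ] Λ s)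
    (hsaturated : ∫ ω, (∫ s in Set.Ioi 0, g s ω) ∂μ = ∫ ω, Λ 0 ω ∂μ) :
    (∀ s t : ℝ, 0 ≤ s → s ≤ t → μ[Λ t | ℱ s] =ᵐ[μ] Λ s) ∧
    (∃ Λinf : Ω → ℝ, Integrable Λinf μ ∧
      (∀ᵐ ω ∂μ, Tendsto (fun t => Λ t ω) atTop (𝓝 (Λinf ω))) ∧
      (∀ t : ℝ, 0 ≤ t → μ[Λinf | ℱ t] =ᵐ[μ] Λ t)) ∧
    (∀ ε : ℝ, 0 < ε → ∃ K : ℝ, ∀ t : ℝ, 0 ≤ t →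
      (∫⁻ ω in {ω | K ≤ |Λ t ω|}, ENNReal.ofReal |Λ t ω| ∂μ) ≤ ENNReal.ofReal ε) ∧
    Tendsto (fun t : ℝ => ∫ ω, Z t ω ∂μ) atTop (𝓝 0) ∧
    (∀ᵐ ω ∂μ, Tendsto (fun t => Z t ω) atTop (𝓝 0)) ∧
    (∀ t : ℝ, 0 ≤ t → μ[fun ω => ∫ s in Set.Ioi t, g s ω | ℱ t] =ᵐ[μ] Z t) := by
  have past_eq (t : ℝ) (ht : 0 ≤ t) (ω : Ω) : ∫ s in Set.Ioc 0 t, g s ω = Λ t ω - Z t ω :=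
    eq_sub_of_add_eq' (hΛ t ht ω).symm
  have closed (t : ℝ) (ht : 0 ≤ t) : μ[fun ω => ∫ s in Set.Ioi 0, g s ω | ℱ t] =ᵐ[μ] Λ t :=
    condExp_integral_Ioi_ae_eq_of_integral_eq hg hΛ_int
      (fun t ht ω => (past_eq t ht ω).trans_le (sub_le_self _ (hZ_nonneg t ω))) hΛ_super
      hsaturated ht
  have tail_eq (t : ℝ) (ht : 0 ≤ t) :
      μ[fun ω => ∫ s in Set.Ioi t, g s ω | ℱ t] =ᵐ[μ] Z t := by
    have past_measurable : StronglyMeasurable[ℱ t] fun ω => ∫ s in Set.Ioc 0 t, g s ω := by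
      simp only [past_eq t ht]
      exact (hΛ_adapted t ht).sub (hZ t ht)
    filter_upwards [condExp_integral_Ioi_ae_eq_sub_integral_Ioc (ℱ.le t) hg ht past_measurable,
      closed t ht] with ω htail hclosed
    rw [htail, hclosed, past_eq t ht, sub_sub_cancel]
  have Z_tendsto := ae_tendsto_zero_of_condExp_integral_Ioi_ae_eq hZ_rc hZ_nonneg hg tail_eq
  have total_integrable := integrable_setIntegral_of_subset hg subset_rfl
  refine ⟨fun s t hs hst => ?_, ⟨_, total_integrable, ?_, closed⟩, fun ε hε => ?_,
    tendsto_integral_zero_of_condExp_integral_Ioi_ae_eq hg tail_eq, Z_tendsto, tail_eq⟩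
  · exact (condExp_congr_ae (closed t (hs.trans hst)).symm).trans
      ((condExp_condExp_of_le (ℱ.mono hst) (ℱ.le t)).trans (closed s hs))
  · filter_upwards [Z_tendsto, ae_tendsto_integral_Ioc_atTop hg] with ω hZω hgω
    refine (zero_add (∫ s in Set.Ioi 0, g s ω) ▸ hZω.add hgω).congr' ?_
    filter_upwards [eventually_ge_atTop 0] with t ht
    exact (hΛ t ht ω).symm
  · have uniform : UniformIntegrable (fun t : Set.Ici (0 : ℝ) => Λ t) 1 μ :=
      (total_integrable.uniformIntegrable_condExp (ℱ := fun t : Set.Ici (0 : ℝ) => ℱ t)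
        fun t => ℱ.le t).ae_eq fun t => closed t t.2
    obtain ⟨K, hK⟩ := exists_forall_setLIntegral_ofReal_abs_le_of_uniformIntegrable uniform hε
    exact ⟨K, fun t ht => hK ⟨t, ht⟩⟩

/-- **Optimal wealth process** (Proposition `owp`): if `Λ_t = X_t Y_t +
∫₀^t (c_s − f_s) Y_s ds` is a supermartingale with `Λ₀ = 1`, `XY` is a
nonnegative càdlàg supermartingale, and the budget constraint is saturated,
`E[∫₀^∞ (c − f) Y dt] = 1`, then `Λ` is a uniformly integrable martingale on
`[0,∞]`, `XY` is a potential with `X_∞ Y_∞ = 0` a.s., and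
`X_t Y_t = E[∫_t^∞ (c_s − f_s) Y_s ds | ℱ_t]`. -/
theorem optimal_wealth_process
    {Ω : Type} {m0 : MeasurableSpace Ω} {μ : Measure Ω} [IsProbabilityMeasure μ]
    (ℱ : Filtration ℝ m0)
    (husual_right : ∀ t : ℝ, (ℱ t : MeasurableSpace Ω) = ⨅ (s : ℝ) (_ : t < s), ℱ s)
    (husual_complete : ∀ (t : ℝ) (A : Set Ω), μ A = 0 → MeasurableSet[ℱ t] A)
    (X Y c f : ℝ → Ω → ℝ)
    (hX_adapted : Adapted ℱ X) (hY_adapted : Adapted ℱ Y)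
    (hX_rc : ∀ ω t, ContinuousWithinAt (fun s => X s ω) (Set.Ici t) t)
    (hX_ll : ∀ ω t, ∃ l : ℝ, Tendsto (fun s => X s ω) (𝓝[<] t) (𝓝 l))
    (hY_rc : ∀ ω t, ContinuousWithinAt (fun s => Y s ω) (Set.Ici t) t)
    (hY_ll : ∀ ω t, ∃ l : ℝ, Tendsto (fun s => Y s ω) (𝓝[<] t) (𝓝 l))
    (hXnn : ∀ t ω, 0 ≤ X t ω) (hYnn : ∀ t ω, 0 ≤ Y t ω)
    (hc : ProgMeasurable ℱ c) (hf : ProgMeasurable ℱ f)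
    (hcnn : ∀ t ω, 0 ≤ c t ω) (hfnn : ∀ t ω, 0 ≤ f t ω)
    (hfY : (∫⁻ ω, (∫⁻ t in Set.Ioi (0:ℝ), ENNReal.ofReal (f t ω * Y t ω)) ∂μ) < ⊤)
    (hcY : (∫⁻ ω, (∫⁻ t in Set.Ioi (0:ℝ), ENNReal.ofReal (c t ω * Y t ω)) ∂μ) < ⊤)
    (hXY_int : ∀ t : ℝ, 0 ≤ t → Integrable (fun ω => X t ω * Y t ω) μ)
    (hXY_super : ∀ s t : ℝ, 0 ≤ s → s ≤ t →
      μ[fun ω => X t ω * Y t ω|ℱ s] ≤ᵐ[μ] fun ω => X s ω * Y s ω)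
    (Λ : ℝ → Ω → ℝ)
    (hΛ : ∀ t : ℝ, 0 ≤ t → ∀ ω, Λ t ω =
      X t ω * Y t ω + ∫ s in Set.Ioc (0:ℝ) t, (c s ω - f s ω) * Y s ω)
    (hΛ_adapted : ∀ t : ℝ, 0 ≤ t → StronglyMeasurable[ℱ t] (Λ t))
    (hΛ_int : ∀ t : ℝ, 0 ≤ t → Integrable (Λ t) μ)
    (hΛ_super : ∀ s t : ℝ, 0 ≤ s → s ≤ t → μ[Λ t|ℱ s] ≤ᵐ[μ] Λ s)
    (hΛ0 : ∀ ω, Λ 0 ω = 1)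
    (hsaturated : (∫ ω, (∫ t in Set.Ioi (0:ℝ), (c t ω - f t ω) * Y t ω) ∂μ) = 1) :
    -- (i) Λ is a martingale on [0,∞)
    (∀ s t : ℝ, 0 ≤ s → s ≤ t → μ[Λ t|ℱ s] =ᵐ[μ] Λ s) ∧
    -- (ii) Λ converges a.s. to an integrable limit and, extended by it,
    -- is a uniformly integrable martingale
    (∃ Λinf : Ω → ℝ, Integrable Λinf μ ∧
      (∀ᵐ ω ∂μ, Tendsto (fun t => Λ t ω) atTop (𝓝 (Λinf ω))) ∧
      (∀ t : ℝ, 0 ≤ t → μ[Λinf|ℱ t] =ᵐ[μ] Λ t)) ∧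
    (∀ ε : ℝ, 0 < ε → ∃ K : ℝ, ∀ t : ℝ, 0 ≤ t →
      (∫⁻ ω in {ω | K ≤ |Λ t ω|}, ENNReal.ofReal |Λ t ω| ∂μ) ≤ ENNReal.ofReal ε) ∧
    -- (iii) XY is a potential
    Tendsto (fun t : ℝ => ∫ ω, X t ω * Y t ω ∂μ) atTop (𝓝 (0:ℝ)) ∧
    -- (iv) X_t Y_t → 0 a.s.
    (∀ᵐ ω ∂μ, Tendsto (fun t => X t ω * Y t ω) atTop (𝓝 (0:ℝ))) ∧
    -- consequently X_t Y_t = E[∫_t^∞ (c − f) Y ds | ℱ_t]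
    (∀ t : ℝ, 0 ≤ t →
      (μ[fun ω => ∫ s in Set.Ioi t, (c s ω - f s ω) * Y s ω|ℱ t]
        =ᵐ[μ] fun ω => X t ω * Y t ω)) :=
  optimal_wealth_process_general ℱ
    (fun t _ => ((hX_adapted t).mul (hY_adapted t)).stronglyMeasurable)
    (fun ω t => (hX_rc ω t).mul (hY_rc ω t)) (fun t ω => mul_nonneg (hXnn t ω) (hYnn t ω))
    (integrable_prod_sub_mul_of_isStronglyProgressive (fun t => (hY_adapted t).mono (ℱ.le t) le_rfl)
      hY_rc hYnn hc hf hcnn hfnn hcY hfY)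
    hΛ hΛ_adapted hΛ_int hΛ_super (by simp [hΛ0, hsaturated])
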